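/- arXiv:1412.7607 — 3 statements merged into one kernel-verified Lean document; each statement's English description precedes it below -/
import Mathlib

section
/- For all integers i ≥ 0, j ≥ 0 and k ≥ 1: (a) Q_{(i,j,k)}(1) = −2, and Q_{(i,j,k)} has a real root strictly greater than 1; (b) a positive real number λ is a root of Q_{(i,j,k)} if and only if 1/λ is a root of Q_{(i,j,k)}; consequently, the largest real root of Q_{(i,j,k)} is greater than 1 and its reciprocal is the smallest positive real root of Q_{(i,j,k)}. -/
/-- The clique polynomial `Q_{(i,j,k)}(t) = t^{i+j+2k} - t^{i+j+k} - t^{j+k} - t^{i+k} - t^k + 1`,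
as a real function. -/
noncomputable def Qfun (i j k : ℕ) (t : ℝ) : ℝ :=
  t ^ (i + j + 2 * k) - t ^ (i + j + k) - t ^ (j + k) - t ^ (i + k) - t ^ k + 1

open Filter Set

theorem exists_isGreatest_preimage_singleton_of_lt_of_eventually_gt {α β : Type*}
    [ConditionallyCompleteLinearOrder α] [DenselyOrdered α] [TopologicalSpace α] [OrderTopology α]
    [LinearOrder β] [TopologicalSpace β] [OrderClosedTopology β]
    {f : α → β} {a : α} {c : β} (hf : Continuous f) (ha : f a < c)
    (hc : ∀ᶠ t in atTop, c < f t) :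
    ∃ L, a < L ∧ IsGreatest (f ⁻¹' {c}) L := by
  have : Nonempty α := ⟨a⟩
  obtain ⟨b, hb⟩ := eventually_atTop.mp hc
  have hab : a ≤ b := le_of_not_ge fun hba => (hb a hba).not_gt ha
  have hcompact : IsCompact (Icc a b ∩ f ⁻¹' {c}) :=
    isCompact_Icc.inter_right (isClosed_singleton.preimage hf)
  have hnonempty : (Icc a b ∩ f ⁻¹' {c}).Nonempty :=
    intermediate_value_Icc hab hf.continuousOn ⟨ha.le, (hb b le_rfl).le⟩
  obtain ⟨L, ⟨⟨haL, -⟩, hL⟩, hmax⟩ := hcompact.exists_isGreatest hnonempty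
  refine ⟨L, haL.lt_of_ne fun h => ha.ne (h ▸ hL), hL, fun t ht => ?_⟩
  have htb : t ≤ b := le_of_not_ge fun hbt => (hb t hbt).ne' ht
  rcases le_total t a with hta | hat
  · exact hta.trans haL
  · exact hmax ⟨⟨hat, htb⟩, ht⟩

theorem isLeast_inv_of_isGreatest {K : Type*} [Semifield K] [LinearOrder K] [IsStrictOrderedRing K]
    {s : Set K} {L : K} (hs : ∀ x ∈ s, 0 < x → x⁻¹ ∈ s) (hL : IsGreatest s L) (hL₀ : 0 < L) :
    IsLeast (s ∩ Ioi 0) L⁻¹ :=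
  ⟨⟨hs L hL.1 hL₀, inv_pos.mpr hL₀⟩,
    fun x ⟨hx, hx₀⟩ => inv_le_of_inv_le₀ hx₀ (hL.2 (hs x hx hx₀))⟩

section Qfun

variable (i j k : ℕ)

theorem Qfun_one : Qfun i j k 1 = -2 := by
  norm_num [Qfun]

theorem continuous_Qfun : Continuous (Qfun i j k) := by
  unfold Qfun
  fun_prop

theorem pow_mul_Qfun_inv {t : ℝ} (ht : t ≠ 0) :
    t ^ (i + j + 2 * k) * Qfun i j k t⁻¹ = Qfun i j k t := by
  simp only [Qfun, inv_pow]
  field_simp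
  ring

theorem Qfun_inv_eq_zero_iff {t : ℝ} (ht : t ≠ 0) : Qfun i j k t⁻¹ = 0 ↔ Qfun i j k t = 0 := by
  rw [← pow_mul_Qfun_inv i j k ht, mul_eq_zero, or_iff_right (pow_ne_zero _ ht)]

variable {k}

theorem Qfun_pos_of_four_le (hk : 1 ≤ k) {t : ℝ} (ht : 4 ≤ t) : 0 < Qfun i j k t := by
  have one_le : 1 ≤ t := by linarith
  have hj : t ^ (j + k) ≤ t ^ (i + j + k) := pow_le_pow_right₀ one_le (by lia)
  have hi : t ^ (i + k) ≤ t ^ (i + j + k) := pow_le_pow_right₀ one_le (by lia)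
  have h₀ : t ^ k ≤ t ^ (i + j + k) := pow_le_pow_right₀ one_le (by lia)
  have leading_term : 4 * t ^ (i + j + k) ≤ t ^ (i + j + 2 * k) :=
    calc 4 * t ^ (i + j + k) ≤ t * t ^ (i + j + k) := by gcongr
      _ = t ^ (i + j + k + 1) := (pow_succ' t _).symm
      _ ≤ t ^ (i + j + 2 * k) := pow_le_pow_right₀ one_le (by lia)
  unfold Qfun
  linarith

theorem exists_isGreatest_Qfun_roots (hk : 1 ≤ k) :
    ∃ L, 1 < L ∧ IsGreatest (Qfun i j k ⁻¹' {0}) L :=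
  exists_isGreatest_preimage_singleton_of_lt_of_eventually_gt (continuous_Qfun i j k)
    (by norm_num [Qfun_one])
    ((eventually_ge_atTop 4).mono fun _ => Qfun_pos_of_four_le i j hk)

end Qfun

theorem stmt5 (i j k : ℕ) (hk : 1 ≤ k) :
    Qfun i j k 1 = -2 ∧
    (∃ r : ℝ, 1 < r ∧ Qfun i j k r = 0) ∧
    (∀ l : ℝ, 0 < l → (Qfun i j k l = 0 ↔ Qfun i j k (1 / l) = 0)) ∧
    ∃ L : ℝ, Qfun i j k L = 0 ∧ (∀ r : ℝ, Qfun i j k r = 0 → r ≤ L) ∧ 1 < L ∧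
      Qfun i j k (1 / L) = 0 ∧ ∀ r : ℝ, 0 < r → Qfun i j k r = 0 → 1 / L ≤ r := by
  simp only [one_div]
  obtain ⟨L, one_lt_L, hL⟩ := exists_isGreatest_Qfun_roots i j hk
  have inv_root_iff (l : ℝ) (hl : 0 < l) : Qfun i j k l = 0 ↔ Qfun i j k l⁻¹ = 0 :=
    (Qfun_inv_eq_zero_iff i j k hl.ne').symm
  have hL_inv : IsLeast (Qfun i j k ⁻¹' {0} ∩ Ioi 0) L⁻¹ :=
    isLeast_inv_of_isGreatest (fun l hl hl₀ => (inv_root_iff l hl₀).mp hl) hL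
      (zero_lt_one.trans one_lt_L)
  exact ⟨Qfun_one i j k, ⟨L, one_lt_L, hL.1⟩, inv_root_iff, L, hL.1, fun r hr => hL.2 hr, one_lt_L,
    hL_inv.1.1, fun r hr₀ hr => hL_inv.2 ⟨hr, hr₀⟩⟩
end

section
/- For each integer g ≥ 2, let λ_g be the largest real root of the polynomial t^{2g} − t^{g+1} − t^{g} − t^{g−1} + 1 (such a root exists and satisfies λ_g > 1). Then lim_{g→∞} g · log λ_g = log((3 + √5)/2). -/
open Filter

/-- The Lanneau–Thiffeault polynomial `f_{(g,1)}(t) = t^{2g} - t^{g+1} - t^g - t^{g-1} + 1`,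
as a real function. -/
noncomputable def LTfun (g : ℕ) (t : ℝ) : ℝ :=
  t ^ (2 * g) - t ^ (g + 1) - t ^ g - t ^ (g - 1) + 1

/-!
Dividing the palindromic polynomial `LTfun g` by `t ^ g` and substituting `t = exp u` turns the
equation `LTfun g t = 0` into `cosh (g u) - cosh u = 1 / 2`. For `g > 1` the left-hand side is
strictly increasing in `u ≥ 0` and at least `(g² - 1) u² / 2`, so there is exactly one root
`exp u > 1`. The same bound forces `u → 0` as `g → ∞`, so
`g u = arcosh (1 / 2 + cosh u) → arcosh (3 / 2) = log ((3 + √5) / 2)`.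
-/

section Hyperbolic

open Real Set Topology

theorem cosh_sub_cosh (x y : ℝ) :
    cosh x - cosh y = 2 * sinh ((x + y) / 2) * sinh ((x - y) / 2) := by
  have hx := cosh_add ((x + y) / 2) ((x - y) / 2)
  have hy := cosh_sub ((x + y) / 2) ((x - y) / 2)
  rw [show (x + y) / 2 + (x - y) / 2 = x by ring] at hx
  rw [show (x + y) / 2 - (x - y) / 2 = y by ring] at hy
  rw [hx, hy]
  ring

theorem half_sq_sub_sq_le_cosh_sub_cosh {x y : ℝ} (h : |y| ≤ |x|) :
    (x ^ 2 - y ^ 2) / 2 ≤ cosh x - cosh y := by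
  have hadd : 0 ≤ (|x| + |y|) / 2 := by positivity
  have hsub : 0 ≤ (|x| - |y|) / 2 := by linarith
  calc (x ^ 2 - y ^ 2) / 2 = 2 * ((|x| + |y|) / 2) * ((|x| - |y|) / 2) := by
        rw [← sq_abs x, ← sq_abs y]; ring
    _ ≤ 2 * sinh ((|x| + |y|) / 2) * sinh ((|x| - |y|) / 2) := by
        gcongr
        · exact self_le_sinh_iff.2 hadd
        · exact self_le_sinh_iff.2 hsub
    _ = cosh x - cosh y := by rw [← cosh_sub_cosh, cosh_abs, cosh_abs]

theorem mul_sq_le_cosh_mul_sub_cosh {a : ℝ} (ha : 1 ≤ |a|) (u : ℝ) :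
    (a ^ 2 - 1) / 2 * u ^ 2 ≤ cosh (a * u) - cosh u := by
  have hu : |u| ≤ |a * u| := by
    rw [abs_mul]
    exact le_mul_of_one_le_left (abs_nonneg u) ha
  calc (a ^ 2 - 1) / 2 * u ^ 2 = ((a * u) ^ 2 - u ^ 2) / 2 := by ring
    _ ≤ cosh (a * u) - cosh u := half_sq_sub_sq_le_cosh_sub_cosh hu

theorem strictMonoOn_cosh_mul_sub_cosh {a : ℝ} (ha : 1 < |a|) :
    StrictMonoOn (fun u => cosh (a * u) - cosh u) (Ici 0) := by
  intro u (hu : 0 ≤ u) v _ huv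
  have hadd : (|a| * u + u) / 2 < (|a| * v + v) / 2 := by nlinarith
  have hsub : (|a| * u - u) / 2 < (|a| * v - v) / 2 := by nlinarith
  have hadd_nonneg : 0 ≤ (|a| * u + u) / 2 := by nlinarith
  have hsub_nonneg : 0 ≤ (|a| * u - u) / 2 := by nlinarith
  have hcosh_abs (w : ℝ) : cosh (a * w) = cosh (|a| * w) := by
    rw [← cosh_abs, ← cosh_abs (|a| * w), abs_mul, abs_mul, abs_abs]
  simp only [hcosh_abs, cosh_sub_cosh, mul_assoc]
  exact mul_lt_mul_of_pos_left (mul_lt_mul'' (sinh_lt_sinh.2 hadd) (sinh_lt_sinh.2 hsub)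
    (sinh_nonneg_iff.2 hadd_nonneg) (sinh_nonneg_iff.2 hsub_nonneg)) two_pos

theorem exists_pos_cosh_mul_sub_cosh_eq {a c : ℝ} (ha : 1 < |a|) (hc : 0 < c) :
    ∃ u, 0 < u ∧ cosh (a * u) - cosh u = c := by
  have hden : 0 < a ^ 2 - 1 := sub_pos.2 ((one_lt_sq_iff_one_lt_abs a).2 ha)
  have hcont : Continuous fun u => cosh (a * u) - cosh u := by fun_prop
  have hright : c ≤ cosh (a * √(2 * c / (a ^ 2 - 1))) - cosh √(2 * c / (a ^ 2 - 1)) := by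
    refine le_trans (le_of_eq ?_) (mul_sq_le_cosh_mul_sub_cosh ha.le _)
    rw [sq_sqrt (by positivity)]
    field_simp
  obtain ⟨u, hu, huc⟩ := intermediate_value_Ioc (sqrt_nonneg (2 * c / (a ^ 2 - 1)))
    hcont.continuousOn (show c ∈ Ioc _ _ from ⟨by simpa using hc, hright⟩)
  exact ⟨u, hu.1, huc⟩

variable {ι : Type*} {l : Filter ι} {a u : ι → ℝ} {c : ℝ}

theorem tendsto_zero_of_cosh_mul_sub_cosh_eq (ha : Tendsto a l atTop)
    (h : ∀ᶠ i in l, cosh (a i * u i) - cosh (u i) = c) : Tendsto u l (𝓝 0) := by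
  have hden : Tendsto (fun i => a i ^ 2 - 1) l atTop :=
    tendsto_atTop_add_const_right _ _ ((tendsto_pow_atTop two_ne_zero).comp ha)
  have hbound : Tendsto (fun i => √(2 * c / (a i ^ 2 - 1))) l (𝓝 0) := by
    simpa using (hden.const_div_atTop (2 * c)).sqrt
  refine squeeze_zero_norm' ?_ hbound
  filter_upwards [h, ha.eventually_gt_atTop 1] with i hi hai
  have hpos : 0 < a i ^ 2 - 1 := by nlinarith
  refine abs_le_sqrt ((le_div_iff₀ hpos).2 ?_)
  linarith [mul_sq_le_cosh_mul_sub_cosh (hai.le.trans (le_abs_self _)) (u i)]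

theorem tendsto_mul_of_cosh_mul_sub_cosh_eq (hc : 0 ≤ c) (ha : Tendsto a l atTop)
    (hu : ∀ᶠ i in l, 0 ≤ u i) (h : ∀ᶠ i in l, cosh (a i * u i) - cosh (u i) = c) :
    Tendsto (fun i => a i * u i) l (𝓝 (arcosh (c + 1))) := by
  have hcosh : Tendsto (fun i => c + cosh (u i)) l (𝓝 (c + 1)) := by
    simpa using ((continuous_cosh.tendsto 0).comp
      (tendsto_zero_of_cosh_mul_sub_cosh_eq ha h)).const_add c
  have hmem : ∀ i, c + cosh (u i) ∈ Ici 1 := fun i =>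
    (one_le_cosh (u i)).trans (le_add_of_nonneg_left hc)
  have hlim : Tendsto (fun i => arcosh (c + cosh (u i))) l (𝓝 (arcosh (c + 1))) :=
    (continuousOn_arcosh (c + 1) (le_add_of_nonneg_left hc)).tendsto.comp
      (tendsto_nhdsWithin_iff.2 ⟨hcosh, .of_forall hmem⟩)
  refine hlim.congr' ?_
  filter_upwards [h, hu, ha.eventually_ge_atTop 0] with i hi hui hai
  rw [← hi, sub_add_cancel, arcosh_cosh (mul_nonneg hai hui)]

theorem arcosh_three_halves : arcosh (3 / 2) = log ((3 + √5) / 2) := by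
  have hsqrt : √((3 / 2) ^ 2 - 1) = √5 / 2 := by
    rw [show ((3 : ℝ) / 2) ^ 2 - 1 = 5 / 2 ^ 2 by norm_num, sqrt_div' _ (by positivity),
      sqrt_sq zero_le_two]
  rw [arcosh, hsqrt, add_div]

end Hyperbolic

section LanneauThiffeault

open Real Set

variable {g : ℕ} {t : ℝ}

theorem LTfun_exp (hg : g ≠ 0) (u : ℝ) :
    LTfun g (exp u) = 2 * exp (g * u) * (cosh (g * u) - cosh u - 1 / 2) := by
  obtain ⟨n, rfl⟩ := Nat.exists_eq_add_one_of_ne_zero hg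
  rw [LTfun, cosh_eq, cosh_eq, exp_neg, exp_neg, exp_nat_mul, Nat.add_sub_cancel]
  field_simp
  ring

theorem LTfun_eq_zero_iff (hg : g ≠ 0) (ht : 0 < t) :
    LTfun g t = 0 ↔ cosh (g * log t) - cosh (log t) = 1 / 2 := by
  have hfactor := LTfun_exp hg (log t)
  rw [exp_log ht] at hfactor
  rw [hfactor, mul_eq_zero_iff_left (by positivity), sub_eq_zero]

theorem exists_one_lt_isGreatest_LTfun_eq_zero (hg : 1 < g) :
    ∃ L, 1 < L ∧ IsGreatest {t | LTfun g t = 0} L := by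
  have hg0 : g ≠ 0 := by omega
  have hg1 : 1 < |(g : ℝ)| := by rwa [Nat.abs_cast, Nat.one_lt_cast]
  obtain ⟨u, hu, hroot⟩ := exists_pos_cosh_mul_sub_cosh_eq hg1 one_half_pos
  refine ⟨exp u, one_lt_exp_iff.2 hu, ?_, fun r hr => ?_⟩
  · exact (LTfun_eq_zero_iff hg0 (exp_pos u)).2 (by rwa [log_exp])
  · by_contra! hlt
    have hr_pos : 0 < r := (exp_pos u).trans hlt
    have hlog : u < log r := (lt_log_iff_exp_lt hr_pos).2 hlt
    have hr_root := (LTfun_eq_zero_iff hg0 hr_pos).1 hr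
    exact (strictMonoOn_cosh_mul_sub_cosh hg1 hu.le (hu.trans hlog).le hlog).ne
      (hroot.trans hr_root.symm)

end LanneauThiffeault

theorem stmt10 :
    (∀ g : ℕ, 2 ≤ g →
      ∃ L : ℝ, 1 < L ∧ LTfun g L = 0 ∧ ∀ r : ℝ, LTfun g r = 0 → r ≤ L) ∧
    ∀ lam : ℕ → ℝ,
      (∀ g : ℕ, 2 ≤ g → LTfun g (lam g) = 0 ∧ ∀ r : ℝ, LTfun g r = 0 → r ≤ lam g) →
      Tendsto (fun g : ℕ => (g : ℝ) * Real.log (lam g)) atTop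
        (nhds (Real.log ((3 + Real.sqrt 5) / 2))) := by
  refine ⟨fun g hg => exists_one_lt_isGreatest_LTfun_eq_zero hg, fun lam hlam => ?_⟩
  have one_lt_lam : ∀ g, 2 ≤ g → 1 < lam g := fun g hg => by
    obtain ⟨L, hL, hroot, -⟩ := exists_one_lt_isGreatest_LTfun_eq_zero hg
    exact hL.trans_le ((hlam g hg).2 L hroot)
  rw [← arcosh_three_halves, show (3 / 2 : ℝ) = 1 / 2 + 1 by norm_num]
  refine tendsto_mul_of_cosh_mul_sub_cosh_eq one_half_pos.le tendsto_natCast_atTop_atTop ?_ ?_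
  · filter_upwards [eventually_ge_atTop 2] with g hg
    exact Real.log_nonneg (one_lt_lam g hg).le
  · filter_upwards [eventually_ge_atTop 2] with g hg
    exact (LTfun_eq_zero_iff (by omega) (one_pos.trans (one_lt_lam g hg))).1 (hlam g hg).1
end

section
/- For each integer g ≥ 1, let λ_g be the largest real root of the polynomial t^{2g+4} − t^{g+4} − t^{g+2} − t^{g} + 1 (such a root exists and satisfies λ_g > 1). Then lim_{g→∞} g · log λ_g = log((3 + √5)/2). -/
open Filter

/-- The polynomial `t^{2g+4} - t^{g+4} - t^{g+2} - t^g + 1`, as a real function. -/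
noncomputable def Pfun (g : ℕ) (t : ℝ) : ℝ :=
  t ^ (2 * g + 4) - t ^ (g + 4) - t ^ (g + 2) - t ^ g + 1

/-!
The equation `Pfun g t = 0` is the quadratic `t⁴ y² - (t⁴ + t² + 1) y + 1 = 0` in `y = t ^ g`. For
`1 ≤ t` the product of its roots is `t⁻⁴ ≤ 1` and `y ≥ 1`, so `y` is the larger root, a continuous
function of `t` which does not involve `g`. Moreover `y < 3`, which forces `λ_g → 1`; hence
`λ_g ^ g` tends to the larger root of `y² - 3 y + 1`.
-/

theorem eq_larger_root_of_quadratic_eq_zero {a b c y : ℝ} (ha : 0 < a) (hy : 0 < y)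
    (hc : c ≤ a * y ^ 2) (h : a * y ^ 2 - b * y + c = 0) :
    y = (b + √(b ^ 2 - 4 * a * c)) / (2 * a) := by
  have hdiscr : b ^ 2 - 4 * a * c = (2 * a * y - b) ^ 2 := by linear_combination -4 * a * h
  have hnonneg : 0 ≤ 2 * a * y - b :=
    nonneg_of_mul_nonneg_left (b := y) (by linarith) hy
  rw [hdiscr, Real.sqrt_sq hnonneg]
  field_simp
  ring

theorem tendsto_one_of_pow_le {x : ℕ → ℝ} {C : ℝ} (hx : ∀ᶠ n in atTop, 1 ≤ x n)
    (hC : ∀ᶠ n in atTop, x n ^ n ≤ C) : Tendsto x atTop (nhds 1) := by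
  have hlim : Tendsto (fun n : ℕ => 1 + C / n) atTop (nhds 1) := by
    simpa only [add_zero] using (tendsto_const_div_atTop_nhds_zero_nat C).const_add 1
  refine tendsto_of_tendsto_of_tendsto_of_le_of_le' tendsto_const_nhds hlim hx ?_
  filter_upwards [hx, hC, eventually_gt_atTop 0] with n hxn hCn hn
  have bernoulli : 1 + n * (x n - 1) ≤ x n ^ n := one_add_mul_sub_le_pow (by linarith) n
  have hdiv : x n - 1 ≤ C / n := by
    rw [le_div_iff₀' (by exact_mod_cast hn)]
    linarith
  linarith

theorem tendsto_mul_log_of_pow_eq {x : ℕ → ℝ} {f : ℝ → ℝ} {C : ℝ}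
    (hx : ∀ᶠ n in atTop, 1 ≤ x n) (hC : ∀ᶠ n in atTop, x n ^ n ≤ C)
    (hxf : ∀ᶠ n in atTop, x n ^ n = f (x n)) (hf : ContinuousAt f 1) (hf1 : f 1 ≠ 0) :
    Tendsto (fun n : ℕ => (n : ℝ) * Real.log (x n)) atTop (nhds (Real.log (f 1))) := by
  have hpow : Tendsto (fun n => x n ^ n) atTop (nhds (f 1)) :=
    (hf.tendsto.comp (tendsto_one_of_pow_le hx hC)).congr' (hxf.mono fun _ h => h.symm)
  simpa only [Real.log_pow] using hpow.log hf1

theorem continuous_Pfun (g : ℕ) : Continuous (Pfun g) := by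
  unfold Pfun
  fun_prop

theorem Pfun_eq_quadratic (g : ℕ) (t : ℝ) :
    Pfun g t = t ^ 4 * (t ^ g) ^ 2 - (t ^ 4 + t ^ 2 + 1) * t ^ g + 1 := by
  unfold Pfun
  ring

theorem Pfun_one (g : ℕ) : Pfun g 1 = -1 := by
  norm_num [Pfun]

theorem Pfun_pos {g : ℕ} {t : ℝ} (ht : 1 ≤ t) (hpow : 3 ≤ t ^ g) : 0 < Pfun g t := by
  have h2 : 1 ≤ t ^ 2 := one_le_pow₀ ht
  have h24 : t ^ 2 ≤ t ^ 4 := pow_le_pow_right₀ ht (by norm_num)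
  have hcoeff : t ^ 4 + t ^ 2 + 1 ≤ t ^ 4 * t ^ g := by nlinarith
  calc 0 < (t ^ 4 * t ^ g - (t ^ 4 + t ^ 2 + 1)) * t ^ g + 1 := by
        have := mul_nonneg (sub_nonneg.2 hcoeff) (zero_le_three.trans hpow)
        linarith
    _ = Pfun g t := by rw [Pfun_eq_quadratic]; ring

theorem pow_lt_three_of_Pfun_eq_zero {g : ℕ} {t : ℝ} (ht : 1 ≤ t) (h : Pfun g t = 0) :
    t ^ g < 3 :=
  lt_of_not_ge fun hpow => (Pfun_pos ht hpow).ne' h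

theorem le_three_of_Pfun_eq_zero {g : ℕ} (hg : g ≠ 0) {t : ℝ} (h : Pfun g t = 0) : t ≤ 3 := by
  rcases le_total t 1 with ht | ht
  · linarith
  · exact (le_self_pow₀ ht hg).trans (pow_lt_three_of_Pfun_eq_zero ht h).le

theorem exists_one_lt_Pfun_eq_zero {g : ℕ} (hg : g ≠ 0) : ∃ t, 1 < t ∧ Pfun g t = 0 := by
  have h3 : 0 < Pfun g 3 := Pfun_pos (by norm_num) (le_self_pow₀ (by norm_num) hg)
  have hsign : (0 : ℝ) ∈ Set.Ioo (Pfun g 1) (Pfun g 3) := ⟨by norm_num [Pfun_one], h3⟩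
  obtain ⟨t, ht, hroot⟩ :=
    intermediate_value_Ioo (by norm_num) (continuous_Pfun g).continuousOn hsign
  exact ⟨t, ht.1, hroot⟩

theorem exists_isGreatest_Pfun_eq_zero {g : ℕ} (hg : g ≠ 0) :
    ∃ L, IsGreatest {t | Pfun g t = 0} L := by
  have hclosed : IsClosed {t | Pfun g t = 0} := isClosed_eq (continuous_Pfun g) continuous_const
  obtain ⟨t, -, ht⟩ := exists_one_lt_Pfun_eq_zero hg
  exact ⟨_, hclosed.isGreatest_csSup ⟨t, ht⟩ ⟨3, fun _ => le_three_of_Pfun_eq_zero hg⟩⟩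

theorem one_lt_of_isGreatest_Pfun_eq_zero {g : ℕ} (hg : g ≠ 0) {L : ℝ}
    (hL : IsGreatest {t | Pfun g t = 0} L) : 1 < L := by
  obtain ⟨t, ht, hroot⟩ := exists_one_lt_Pfun_eq_zero hg
  exact ht.trans_le (hL.2 hroot)

/-- The larger root `y` of the quadratic `t⁴ y² - (t⁴ + t² + 1) y + 1`, whose roots are the
candidates for `t ^ g` when `Pfun g t = 0`. At `t = 0` it has the junk value `0`. -/
noncomputable def largerRoot (t : ℝ) : ℝ :=
  (t ^ 4 + t ^ 2 + 1 + √((t ^ 4 + t ^ 2 + 1) ^ 2 - 4 * t ^ 4)) / (2 * t ^ 4)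

theorem pow_eq_largerRoot {g : ℕ} {t : ℝ} (ht : 1 ≤ t) (h : Pfun g t = 0) :
    t ^ g = largerRoot t := by
  have ht0 : 0 < t := by linarith
  have hprod : 1 ≤ t ^ 4 * (t ^ g) ^ 2 :=
    one_le_mul_of_one_le_of_one_le (one_le_pow₀ ht) (one_le_pow₀ (one_le_pow₀ ht))
  rw [Pfun_eq_quadratic] at h
  simpa only [mul_one, largerRoot] using
    eq_larger_root_of_quadratic_eq_zero (pow_pos ht0 4) (pow_pos ht0 g) hprod h

theorem largerRoot_one : largerRoot 1 = (3 + √5) / 2 := by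
  norm_num [largerRoot]

theorem continuousAt_largerRoot {t : ℝ} (ht : t ≠ 0) : ContinuousAt largerRoot t := by
  unfold largerRoot
  fun_prop (disch := positivity)

theorem tendsto_mul_log_of_Pfun_eq_zero {x : ℕ → ℝ} (hx : ∀ᶠ g in atTop, 1 ≤ x g)
    (hroot : ∀ᶠ g in atTop, Pfun g (x g) = 0) :
    Tendsto (fun g : ℕ => (g : ℝ) * Real.log (x g)) atTop (nhds (Real.log ((3 + √5) / 2))) := by
  rw [← largerRoot_one]
  refine tendsto_mul_log_of_pow_eq (C := 3) hx ?_ ?_ (continuousAt_largerRoot one_ne_zero) ?_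
  · filter_upwards [hx, hroot] with g h1 h0 using (pow_lt_three_of_Pfun_eq_zero h1 h0).le
  · filter_upwards [hx, hroot] with g h1 h0 using pow_eq_largerRoot h1 h0
  · rw [largerRoot_one]
    positivity

theorem stmt11 :
    (∀ g : ℕ, 1 ≤ g →
      ∃ L : ℝ, 1 < L ∧ Pfun g L = 0 ∧ ∀ r : ℝ, Pfun g r = 0 → r ≤ L) ∧
    ∀ lam : ℕ → ℝ,
      (∀ g : ℕ, 1 ≤ g → Pfun g (lam g) = 0 ∧ ∀ r : ℝ, Pfun g r = 0 → r ≤ lam g) →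
      Tendsto (fun g : ℕ => (g : ℝ) * Real.log (lam g)) atTop
        (nhds (Real.log ((3 + Real.sqrt 5) / 2))) := by
  refine ⟨fun g hg => ?_, fun lam hlam => tendsto_mul_log_of_Pfun_eq_zero ?_ ?_⟩
  · have hg0 : g ≠ 0 := Nat.one_le_iff_ne_zero.1 hg
    obtain ⟨L, hL⟩ := exists_isGreatest_Pfun_eq_zero hg0
    exact ⟨L, one_lt_of_isGreatest_Pfun_eq_zero hg0 hL, hL.1, fun _ hr => hL.2 hr⟩
  · filter_upwards [eventually_ge_atTop 1] with g hg
    exact (one_lt_of_isGreatest_Pfun_eq_zero (Nat.one_le_iff_ne_zero.1 hg) (hlam g hg)).le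
  · filter_upwards [eventually_ge_atTop 1] with g hg using (hlam g hg).1
end
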